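/- Let d = 2m ≥ 4 be an even integer and let J be the canonical d×d symplectic form. Then the average over the Haar probability measure on the real orthogonal group O(d) of the total variation distance between the Born distribution of the first column of J Oᵀ J O and the constant distribution satisfies √(2/(πe)) − 10/d ≤ ∫_{O(d)} (1/2)·∑_{x=0}^{d−1} | ((J Oᵀ J O)_{x,0})² − 1/d | dμ(O) ≤ √(2/(πe)) + 5/d. -/

import Mathlib

/-!
The column in question is `J v` with `v = Oᵀ J O e₀`. Since `J` is a signed permutation matrix, the
total variation distance only depends on the squared coordinates of `v`. As `J` is skew and
orthogonal, `v` is a unit vector with `v₀ = 0`. Haar measure on a compact group is right invariant,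
and multiplying `O` on the right by an orthogonal matrix `K` fixing `e₀` replaces `v` by `Kᵀ v`, so
`v` is uniform on the unit sphere of `e₀ᗮ`, of dimension `d - 1`.

Each nonzero-index coordinate of `v` therefore has the law with density proportional to
`(1 - t ^ 2) ^ p` on `[-1, 1]`, where `p = m - 2`. This is obtained from moments: invariance under
rotations of a coordinate plane gives a recursion for the even moments (`moment_succ`), the density
satisfies the same one (`weightMoment_succ`), and Weierstrass approximation passes from moments to
the continuous function `x ↦ |x - 1 / d|` (`integral_eq_of_moments`).

With `W = ∫₀¹ (1 - t ^ 2) ^ p` and `s = 1 / √d`, an explicit antiderivative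
(`abs_deviation_sub_le`) then shows that the expected distance lies between
`s (1 - 1 / d) ^ (m - 1) / W` and the same quantity plus `1 / d`. The Wallis bounds for `W`, together
with `(1 - 1 / d) ^ d ≤ e⁻¹ ≤ (1 - 1 / d) ^ (d - 1)`, place that quantity between
`√(2 / (π e)) - 3 / d` and `√(2 / (π e))` (`main_term_bounds`).
-/

open MeasureTheory Matrix

/-- The entrywise (product) measurable structure on matrices. -/
instance matrixMeasurableSpace {m' n' α : Type*} [MeasurableSpace α] :
    MeasurableSpace (Matrix m' n' α) :=
  (inferInstance : MeasurableSpace (m' → n' → α))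

/-- The canonical `2m × 2m` symplectic form `J = [[0, Iₘ],[−Iₘ, 0]]`. -/
noncomputable def sympJ (m : ℕ) (R : Type*) [Ring R] : Matrix (Fin (2 * m)) (Fin (2 * m)) R :=
  Matrix.reindex (finSumFinEquiv.trans (finCongr (two_mul m).symm))
    (finSumFinEquiv.trans (finCongr (two_mul m).symm))
    (Matrix.fromBlocks 0 1 (-1) 0)

/-! ### Haar measure on the orthogonal group -/

instance matrixBorelSpace (n : ℕ) : BorelSpace (Matrix (Fin n) (Fin n) ℝ) :=
  inferInstanceAs (BorelSpace (Fin n → Fin n → ℝ))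

instance orthogonalLocallyCompact (n : ℕ) :
    LocallyCompactSpace (Matrix.orthogonalGroup (Fin n) ℝ) := by
  have : LocallyCompactSpace (Matrix (Fin n) (Fin n) ℝ) :=
    inferInstanceAs (LocallyCompactSpace (Fin n → Fin n → ℝ))
  have hc : IsClosed ((Matrix.orthogonalGroup (Fin n) ℝ : Set (Matrix (Fin n) (Fin n) ℝ))) :=
    isClosed_unitary
  exact hc.isClosedEmbedding_subtypeVal.locallyCompactSpace

lemma haar_isMulRightInvariant {n : ℕ} (μ : Measure (Matrix.orthogonalGroup (Fin n) ℝ))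
    [μ.IsHaarMeasure] [IsProbabilityMeasure μ] : μ.IsMulRightInvariant := by
  refine ⟨fun g => ?_⟩
  have : IsProbabilityMeasure (Measure.map (· * g) μ) :=
    Measure.isProbabilityMeasure_map (measurable_mul_const g).aemeasurable
  exact Measure.isHaarMeasure_eq_of_isProbabilityMeasure _ _

/-! ### Moments of the coordinates of `Oᵀ J O e_z` -/

/-- The vector `Oᵀ J O e_z`, the column of index `z` of `Oᵀ J O`. -/
noncomputable def conjCol {n : ℕ} (J : Matrix (Fin n) (Fin n) ℝ) (z : Fin n)
    (O : Matrix.orthogonalGroup (Fin n) ℝ) (x : Fin n) : ℝ :=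
  ((O : Matrix (Fin n) (Fin n) ℝ)ᵀ * J * (O : Matrix (Fin n) (Fin n) ℝ)) x z

section column

variable {n : ℕ} {J : Matrix (Fin n) (Fin n) ℝ} {z : Fin n}

lemma conjCol_self (hJ : Jᵀ = -J) (O : Matrix.orthogonalGroup (Fin n) ℝ) :
    conjCol J z O z = 0 := by
  have h : ((O : Matrix (Fin n) (Fin n) ℝ)ᵀ * J * (O : Matrix (Fin n) (Fin n) ℝ))ᵀ
      = -((O : Matrix (Fin n) (Fin n) ℝ)ᵀ * J * (O : Matrix (Fin n) (Fin n) ℝ)) := by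
    simp [Matrix.transpose_mul, hJ, Matrix.mul_assoc]
  have h2 := congrFun (congrFun h z) z
  simp only [Matrix.transpose_apply, Matrix.neg_apply] at h2
  unfold conjCol
  linarith

lemma sum_sq_conjCol (hJ2 : Jᵀ * J = 1) (O : Matrix.orthogonalGroup (Fin n) ℝ) :
    ∑ x, conjCol J z O x ^ 2 = 1 := by
  have hO : (O : Matrix (Fin n) (Fin n) ℝ)ᵀ * (O : Matrix (Fin n) (Fin n) ℝ) = 1 :=
    (Matrix.mem_orthogonalGroup_iff' _ _).1 O.2
  have hO' : (O : Matrix (Fin n) (Fin n) ℝ) * (O : Matrix (Fin n) (Fin n) ℝ)ᵀ = 1 :=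
    (Matrix.mem_orthogonalGroup_iff _ _).1 O.2
  set A := (O : Matrix (Fin n) (Fin n) ℝ)ᵀ * J * (O : Matrix (Fin n) (Fin n) ℝ) with hA
  have h : Aᵀ * A = 1 := by
    rw [hA]
    calc _ = (O : Matrix (Fin n) (Fin n) ℝ)ᵀ * (Jᵀ * (((O : Matrix (Fin n) (Fin n) ℝ) *
          (O : Matrix (Fin n) (Fin n) ℝ)ᵀ) * J)) * (O : Matrix (Fin n) (Fin n) ℝ) := by
            simp [Matrix.transpose_mul, Matrix.mul_assoc]
      _ = 1 := by rw [hO', Matrix.one_mul, hJ2, Matrix.mul_one, hO]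
  have h2 := congrFun (congrFun h z) z
  simp only [Matrix.mul_apply, Matrix.transpose_apply, Matrix.one_apply_eq] at h2
  rw [← h2]
  exact Finset.sum_congr rfl fun x _ => by rw [conjCol, sq]

lemma conjCol_sq_le_one (hJ2 : Jᵀ * J = 1) (O : Matrix.orthogonalGroup (Fin n) ℝ) (x : Fin n) :
    conjCol J z O x ^ 2 ≤ 1 := by
  rw [← sum_sq_conjCol (z := z) hJ2 O]
  exact Finset.single_le_sum (f := fun x => conjCol J z O x ^ 2) (fun i _ => sq_nonneg _)
    (Finset.mem_univ x)

lemma abs_conjCol_le_one (hJ2 : Jᵀ * J = 1) (O : Matrix.orthogonalGroup (Fin n) ℝ) (x : Fin n) :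
    |conjCol J z O x| ≤ 1 :=
  (sq_le_one_iff_abs_le_one _).1 (conjCol_sq_le_one hJ2 O x)

lemma continuous_conjCol (x : Fin n) : Continuous fun O => conjCol J z O x := by
  unfold conjCol
  have h : Continuous fun O : Matrix.orthogonalGroup (Fin n) ℝ =>
      (O : Matrix (Fin n) (Fin n) ℝ)ᵀ * J * (O : Matrix (Fin n) (Fin n) ℝ) := by
    fun_prop
  exact h.matrix_elem x z

/-- The Householder reflection `1 - 2 w wᵀ`, for a unit vector `w`. -/
noncomputable def householder (w : Fin n → ℝ) (hw : w ⬝ᵥ w = 1) :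
    Matrix.orthogonalGroup (Fin n) ℝ :=
  ⟨1 - (2 : ℝ) • Matrix.vecMulVec w w, by
    have h : Matrix.vecMulVec w w * Matrix.vecMulVec w w = Matrix.vecMulVec w w := by
      rw [Matrix.vecMulVec_mul_vecMulVec, hw, one_smul]
    rw [Matrix.mem_orthogonalGroup_iff]
    simp only [Matrix.transpose_sub, Matrix.transpose_one, Matrix.transpose_smul,
      Matrix.transpose_vecMulVec, sub_mul, mul_sub, one_mul, mul_one, smul_mul_smul_comm, h]
    module⟩

/-- A reflection that fixes `e_z` acts linearly on `Oᵀ J O e_z` when it multiplies `O` on the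
right. -/
lemma conjCol_mul_householder (O : Matrix.orthogonalGroup (Fin n) ℝ) (w : Fin n → ℝ)
    (hw : w ⬝ᵥ w = 1) (hz : w z = 0) (x : Fin n) :
    conjCol J z (O * householder w hw) x
      = conjCol J z O x - 2 * w x * ∑ y, w y * conjCol J z O y := by
  unfold conjCol householder
  set A := (O : Matrix (Fin n) (Fin n) ℝ)ᵀ * J * (O : Matrix (Fin n) (Fin n) ℝ) with hA
  have e : ((O * ⟨1 - (2 : ℝ) • Matrix.vecMulVec w w, (householder w hw).2⟩ :
      Matrix.orthogonalGroup (Fin n) ℝ) : Matrix (Fin n) (Fin n) ℝ)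
      = (O : Matrix (Fin n) (Fin n) ℝ) * (1 - (2 : ℝ) • Matrix.vecMulVec w w) := rfl
  rw [e]
  have e2 : ((O : Matrix (Fin n) (Fin n) ℝ) * (1 - (2 : ℝ) • Matrix.vecMulVec w w))ᵀ * J *
      ((O : Matrix (Fin n) (Fin n) ℝ) * (1 - (2 : ℝ) • Matrix.vecMulVec w w))
      = (1 - (2 : ℝ) • Matrix.vecMulVec w w) * (A * (1 - (2 : ℝ) • Matrix.vecMulVec w w)) := by
    rw [hA]
    simp [Matrix.transpose_mul, Matrix.mul_assoc, Matrix.transpose_vecMulVec]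
  rw [e2]
  have e3 : ∀ y, (A * (1 - (2 : ℝ) • Matrix.vecMulVec w w)) y z = A y z := by
    intro y
    rw [Matrix.mul_sub, Matrix.mul_one, Matrix.sub_apply, Matrix.mul_apply]
    simp [Matrix.vecMulVec_apply, hz]
  rw [Matrix.sub_mul, Matrix.one_mul, Matrix.sub_apply, e3, Matrix.mul_apply]
  simp only [e3, Matrix.smul_apply, Matrix.vecMulVec_apply, smul_eq_mul, Finset.mul_sum]
  congr 1
  exact Finset.sum_congr rfl fun y _ => by ring

variable (μ : Measure (Matrix.orthogonalGroup (Fin n) ℝ)) [IsProbabilityMeasure μ]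

lemma integrable_pow_mul_pow (hJ2 : Jᵀ * J = 1) (a b : Fin n) (i j : ℕ) :
    Integrable (fun O => conjCol J z O a ^ i * conjCol J z O b ^ j) μ := by
  refine Integrable.of_bound (C := 1) ?_ (Filter.Eventually.of_forall fun O => ?_)
  · exact (((continuous_conjCol a).pow i).mul ((continuous_conjCol b).pow j)).aestronglyMeasurable
  · rw [Real.norm_eq_abs, abs_mul, abs_pow, abs_pow]
    exact mul_le_one₀ (pow_le_one₀ (abs_nonneg _) (abs_conjCol_le_one hJ2 O a))
      (by positivity) (pow_le_one₀ (abs_nonneg _) (abs_conjCol_le_one hJ2 O b))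

variable [μ.IsHaarMeasure]

/-- The even moments of a linear form in two coordinates of `Oᵀ J O e_z` depend only on the
Euclidean norm of its coefficients. -/
lemma integral_rotated_pow (a b : Fin n) (hab : a ≠ b) (ha : a ≠ z) (hb : b ≠ z) (k : ℕ)
    (t : ℝ) :
    ∫ O, (t * conjCol J z O b + conjCol J z O a) ^ (2 * k) ∂μ
      = (1 + t ^ 2) ^ k * ∫ O, conjCol J z O a ^ (2 * k) ∂μ := by
  have := haar_isMulRightInvariant μ
  -- The reflection sends the coordinate `a` to `cos θ` times itself plus `sin θ` times the
  -- coordinate `b`, with `tan θ = t`.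
  set θ := Real.arctan t with hθ
  set w : Fin n → ℝ := Pi.single a (Real.sin (θ / 2)) - Pi.single b (Real.cos (θ / 2)) with hwdef
  have hwa : w a = Real.sin (θ / 2) := by simp [hwdef, hab]
  have hwb : w b = -Real.cos (θ / 2) := by simp [hwdef, hab.symm]
  have hwz : w z = 0 := by simp [hwdef, ha.symm, hb.symm]
  have hsum : ∀ f : Fin n → ℝ, ∑ y, w y * f y
      = Real.sin (θ / 2) * f a - Real.cos (θ / 2) * f b := by
    intro f
    simp [hwdef, sub_mul, Finset.sum_sub_distrib, Pi.single_apply]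
  have hw : w ⬝ᵥ w = 1 := by
    rw [dotProduct, hsum, hwa, hwb]
    nlinarith [Real.sin_sq_add_cos_sq (θ / 2)]
  have hcos : Real.cos θ = 1 - 2 * Real.sin (θ / 2) ^ 2 := by
    have h := Real.cos_two_mul (θ / 2)
    rw [show 2 * (θ / 2) = θ by ring] at h
    nlinarith [Real.sin_sq_add_cos_sq (θ / 2)]
  have hsin : Real.sin θ = 2 * Real.sin (θ / 2) * Real.cos (θ / 2) := by
    have h := Real.sin_two_mul (θ / 2)
    rwa [show 2 * (θ / 2) = θ by ring] at h
  rw [← integral_mul_right_eq_self (μ := μ) (fun O => conjCol J z O a ^ (2 * k)) (householder w hw),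
    ← integral_const_mul]
  refine integral_congr_ae (Filter.Eventually.of_forall fun O => ?_)
  simp only
  rw [conjCol_mul_householder O w hw hwz, hsum, hwa]
  have e : conjCol J z O a - 2 * Real.sin (θ / 2) *
      (Real.sin (θ / 2) * conjCol J z O a - Real.cos (θ / 2) * conjCol J z O b)
      = Real.cos θ * conjCol J z O a + Real.sin θ * conjCol J z O b := by
    rw [hcos, hsin]; ring
  have hpos : (0 : ℝ) < 1 + t ^ 2 := by positivity
  rw [e, hθ, Real.cos_arctan, Real.sin_arctan]
  rw [show 1 / √(1 + t ^ 2) * conjCol J z O a + t / √(1 + t ^ 2) * conjCol J z O b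
    = (t * conjCol J z O b + conjCol J z O a) / √(1 + t ^ 2) by ring, div_pow,
    pow_mul (√(1 + t ^ 2)), Real.sq_sqrt hpos.le]
  field_simp

/-- Comparing the coefficients of `t ^ 2` in `integral_rotated_pow`. -/
lemma mixed_moment (hJ2 : Jᵀ * J = 1) (a b : Fin n) (hab : a ≠ b) (ha : a ≠ z) (hb : b ≠ z)
    (k : ℕ) :
    (2 * k + 1 : ℝ) * ∫ O, conjCol J z O b ^ 2 * conjCol J z O a ^ (2 * k) ∂μ
      = ∫ O, conjCol J z O a ^ (2 * (k + 1)) ∂μ := by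
  set M := ∫ O, conjCol J z O a ^ (2 * (k + 1)) ∂μ with hM
  set E : ℕ → ℝ := fun j =>
    ∫ O, conjCol J z O b ^ j * conjCol J z O a ^ (2 * (k + 1) - j) ∂μ with hE
  set P : Polynomial ℝ := ∑ j ∈ Finset.range (2 * (k + 1) + 1),
    Polynomial.C (E j * ((2 * (k + 1)).choose j : ℝ)) * Polynomial.X ^ j with hP
  set Q : Polynomial ℝ := Polynomial.C M *
    Polynomial.expand ℝ 2 ((1 + Polynomial.X) ^ (k + 1)) with hQ
  have hPQ : P = Q := by
    refine Polynomial.funext fun t => ?_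
    have h := integral_rotated_pow (J := J) μ a b hab ha hb (k + 1) t
    have hQt : Q.eval t = (1 + t ^ 2) ^ (k + 1) * M := by
      simp [hQ, mul_comm]
    rw [hQt, ← h]
    simp only [add_pow]
    rw [integral_finsetSum]
    · rw [hP, Polynomial.eval_finsetSum]
      refine Finset.sum_congr rfl fun j _ => ?_
      simp only [Polynomial.eval_mul, Polynomial.eval_C, Polynomial.eval_pow, Polynomial.eval_X,
        hE]
      rw [mul_assoc, mul_comm, ← integral_const_mul]
      refine integral_congr_ae (Filter.Eventually.of_forall fun O => ?_)
      simp only [mul_pow]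
      ring
    · intro j _
      have h := (integrable_pow_mul_pow (z := z) μ hJ2 b a j (2 * (k + 1) - j)).const_mul
        (t ^ j * ((2 * (k + 1)).choose j : ℝ))
      refine h.congr (Filter.Eventually.of_forall fun O => ?_)
      simp only [mul_pow]
      ring
  have hc := congrArg (fun p : Polynomial ℝ => p.coeff 2) hPQ
  have hc1 : P.coeff 2 = E 2 * ((2 * (k + 1)).choose 2 : ℝ) := by
    simp only [hP, Polynomial.finsetSum_coeff, Polynomial.coeff_C_mul_X_pow]
    rw [Finset.sum_ite_eq, if_pos (Finset.mem_range.2 (by omega))]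
  have hc2 : Q.coeff 2 = M * (k + 1 : ℝ) := by
    rw [hQ, Polynomial.coeff_C_mul]
    congr 1
    have := Polynomial.coeff_expand_mul (R := ℝ) (p := 2) (by norm_num)
      ((1 + Polynomial.X) ^ (k + 1)) 1
    rw [one_mul] at this
    rw [this, Polynomial.coeff_one_add_X_pow]
    simp
  simp only [hc1, hc2, Nat.cast_choose_two] at hc
  have hE2 : E 2 = ∫ O, conjCol J z O b ^ 2 * conjCol J z O a ^ (2 * k) ∂μ := by
    simp only [hE]
    rw [show 2 * (k + 1) - 2 = 2 * k by omega]
  rw [← hE2]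
  push_cast at hc
  have hk : (k + 1 : ℝ) ≠ 0 := by positivity
  apply mul_left_cancel₀ hk
  linarith

/-- The recursion satisfied by the even moments of a coordinate of a uniform unit vector in
dimension `n - 1`: sum `mixed_moment` over the `n - 2` indices `b` other than `a` and `z`. -/
lemma moment_succ (hJ : Jᵀ = -J) (hJ2 : Jᵀ * J = 1) (a : Fin n) (ha : a ≠ z) (k : ℕ) :
    (n + 2 * k - 1 : ℝ) * ∫ O, (conjCol J z O a ^ 2) ^ (k + 1) ∂μ
      = (2 * k + 1 : ℝ) * ∫ O, (conjCol J z O a ^ 2) ^ k ∂μ := by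
  simp only [← pow_mul]
  set M := ∫ O, conjCol J z O a ^ (2 * (k + 1)) ∂μ with hM
  have hsplit : ∀ O, ∑ b ∈ (Finset.univ.erase z).erase a, conjCol J z O b ^ 2
      = 1 - conjCol J z O a ^ 2 := by
    intro O
    have h1 := Finset.add_sum_erase Finset.univ (fun x => conjCol J z O x ^ 2) (Finset.mem_univ z)
    have h2 := Finset.add_sum_erase (Finset.univ.erase z) (fun x => conjCol J z O x ^ 2)
      (Finset.mem_erase.2 ⟨ha, Finset.mem_univ a⟩)
    have h3 := sum_sq_conjCol (z := z) hJ2 O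
    simp only [conjCol_self hJ] at h1
    linarith
  have hcard : (((Finset.univ.erase z).erase a).card : ℝ) = n - 2 := by
    have h1 := Finset.card_erase_add_one (Finset.mem_univ z)
    have h2 := Finset.card_erase_add_one (Finset.mem_erase.2 ⟨ha, Finset.mem_univ a⟩)
    rw [Finset.card_univ, Fintype.card_fin] at h1
    have h3 : ((Finset.univ.erase z).erase a).card + 2 = n := by omega
    have h4 : (((Finset.univ.erase z).erase a).card : ℝ) + 2 = n := by exact_mod_cast h3
    linarith
  have hInt : Integrable (fun O => conjCol J z O a ^ (2 * k)) μ := by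
    simpa using integrable_pow_mul_pow (z := z) μ hJ2 a a (2 * k) 0
  have hInt_succ : Integrable (fun O => conjCol J z O a ^ (2 * (k + 1))) μ := by
    simpa using integrable_pow_mul_pow (z := z) μ hJ2 a a (2 * (k + 1)) 0
  have h1 : ∑ b ∈ (Finset.univ.erase z).erase a, (2 * k + 1 : ℝ) *
      ∫ O, conjCol J z O b ^ 2 * conjCol J z O a ^ (2 * k) ∂μ = (n - 2 : ℝ) * M := by
    rw [← hcard, ← nsmul_eq_mul, ← Finset.sum_const]
    refine Finset.sum_congr rfl fun b hb => ?_
    simp only [Finset.mem_erase] at hb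
    exact mixed_moment μ hJ2 a b (Ne.symm hb.1) ha hb.2.1 k
  rw [← Finset.mul_sum, ← integral_finsetSum] at h1
  · simp only [← Finset.sum_mul, hsplit] at h1
    have h2 : ∫ O, (1 - conjCol J z O a ^ 2) * conjCol J z O a ^ (2 * k) ∂μ
        = ∫ O, conjCol J z O a ^ (2 * k) ∂μ - M := by
      rw [hM, ← integral_sub hInt hInt_succ]
      refine integral_congr_ae (Filter.Eventually.of_forall fun O => ?_)
      simp only
      ring
    rw [h2] at h1
    linarith
  · intro b _
    exact integrable_pow_mul_pow μ hJ2 b a 2 (2 * k)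

end column

/-! ### The weight `(1 - t ^ 2) ^ p` -/

/-- The even moments of the weight `(1 - t ^ 2) ^ p` on `[0, 1]`. -/
noncomputable def weightMoment (p k : ℕ) : ℝ :=
  ∫ t in (0 : ℝ)..1, (t ^ 2) ^ k * (1 - t ^ 2) ^ p

lemma weightMoment_succ (p k : ℕ) :
    (2 * p + 2 * k + 3 : ℝ) * weightMoment p (k + 1) = (2 * k + 1 : ℝ) * weightMoment p k := by
  have hd : ∀ t : ℝ, HasDerivAt (fun t : ℝ => t ^ (2 * k + 1) * (1 - t ^ 2) ^ (p + 1))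
      ((2 * k + 1 : ℝ) * ((t ^ 2) ^ k * (1 - t ^ 2) ^ p)
        - (2 * p + 2 * k + 3 : ℝ) * ((t ^ 2) ^ (k + 1) * (1 - t ^ 2) ^ p)) t := by
    intro t
    have h := (hasDerivAt_pow (2 * k + 1) t).mul
      (((hasDerivAt_pow 2 t).const_sub 1).pow (p + 1))
    refine h.congr_deriv ?_
    simp only [Nat.add_sub_cancel, Pi.pow_apply]
    push_cast
    simp only [pow_mul, pow_succ]
    ring
  have hF := intervalIntegral.integral_eq_sub_of_hasDerivAt (a := 0) (b := 1) (fun t _ => hd t)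
    (Continuous.intervalIntegrable (by fun_prop) _ _)
  rw [intervalIntegral.integral_sub (Continuous.intervalIntegrable (by fun_prop) _ _)
    (Continuous.intervalIntegrable (by fun_prop) _ _), intervalIntegral.integral_const_mul,
    intervalIntegral.integral_const_mul] at hF
  simp at hF
  unfold weightMoment
  linarith

lemma weightMoment_zero_succ (p : ℕ) :
    (2 * p + 3 : ℝ) * weightMoment (p + 1) 0 = (2 * p + 2 : ℝ) * weightMoment p 0 := by
  have h := weightMoment_succ p 0
  have h2 : weightMoment (p + 1) 0 = weightMoment p 0 - weightMoment p 1 := by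
    unfold weightMoment
    rw [← intervalIntegral.integral_sub (Continuous.intervalIntegrable (by fun_prop) _ _)
      (Continuous.intervalIntegrable (by fun_prop) _ _)]
    congr 1
    ext t
    ring
  rw [h2]
  norm_num at h
  linarith

lemma weightMoment_pos (p : ℕ) : 0 < weightMoment p 0 := by
  induction p with
  | zero => simp [weightMoment]
  | succ p ih =>
    have h := weightMoment_zero_succ p
    have : 0 < (2 * p + 3 : ℝ) * weightMoment (p + 1) 0 := by rw [h]; positivity
    exact pos_of_mul_pos_right this (by positivity)

/-- The normalising constant is a Wallis product. -/
lemma weightMoment_sq (p : ℕ) : (2 * p + 1 : ℝ) * weightMoment p 0 ^ 2 = Real.Wallis.W p := by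
  induction p with
  | zero => simp [weightMoment, Real.Wallis.W]
  | succ p ih =>
    have h := weightMoment_zero_succ p
    have h' : weightMoment (p + 1) 0 = (2 * p + 2 : ℝ) / (2 * p + 3) * weightMoment p 0 := by
      field_simp; linarith
    rw [Real.Wallis.W_succ, ← ih, h']
    push_cast
    field_simp
    ring

/-- Two laws on `[0, 1]` with the same moments integrate continuous functions equally (by
Weierstrass approximation); here the second one is the law of `t ^ 2` for the probability
density proportional to `(1 - t ^ 2) ^ p`. -/
lemma integral_eq_of_moments {Ω : Type*} [MeasurableSpace Ω] (μ : Measure Ω)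
    [IsProbabilityMeasure μ] (X : Ω → ℝ) (hX : Measurable X) (hX01 : ∀ ω, X ω ∈ Set.Icc (0 : ℝ) 1)
    (p : ℕ) (hmom : ∀ k, weightMoment p 0 * ∫ ω, X ω ^ k ∂μ = weightMoment p k)
    (F : ℝ → ℝ) (hF : Continuous F) :
    weightMoment p 0 * ∫ ω, F (X ω) ∂μ
      = ∫ t in (0 : ℝ)..1, F (t ^ 2) * (1 - t ^ 2) ^ p := by
  have hInt : ∀ G : ℝ → ℝ, Continuous G → Integrable (fun ω => G (X ω)) μ := by
    intro G hG
    obtain ⟨C, hC⟩ := isCompact_Icc.exists_bound_of_continuousOn (s := Set.Icc (0 : ℝ) 1)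
      hG.continuousOn
    exact Integrable.of_bound (C := C) (hG.measurable.comp hX).aestronglyMeasurable
      (Filter.Eventually.of_forall fun ω => hC _ (hX01 ω))
  have hpoly : ∀ q : Polynomial ℝ, weightMoment p 0 * ∫ ω, q.eval (X ω) ∂μ
      = ∫ t in (0 : ℝ)..1, q.eval (t ^ 2) * (1 - t ^ 2) ^ p := by
    intro q
    induction q using Polynomial.induction_on' with
    | add f g hf hg =>
      simp only [Polynomial.eval_add, add_mul]
      rw [integral_add (hInt _ f.continuous) (hInt _ g.continuous), mul_add, hf, hg,
        intervalIntegral.integral_add (Continuous.intervalIntegrable (by fun_prop) _ _)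
          (Continuous.intervalIntegrable (by fun_prop) _ _)]
    | monomial k a =>
      simp only [Polynomial.eval_monomial, mul_assoc]
      rw [integral_const_mul, intervalIntegral.integral_const_mul]
      have := hmom k
      rw [weightMoment.eq_1 p k] at this
      rw [← this]
      ring
  have hw := weightMoment_pos p
  refine eq_of_forall_dist_le fun ε hε => ?_
  rw [Real.dist_eq]
  set δ := ε / (2 * weightMoment p 0) with hδ
  have hδ0 : 0 < δ := by positivity
  obtain ⟨q, hq⟩ := exists_polynomial_near_of_continuousOn 0 1 F hF.continuousOn δ hδ0
  have h1 : |∫ ω, F (X ω) ∂μ - ∫ ω, q.eval (X ω) ∂μ| ≤ δ := by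
    rw [← integral_sub (hInt _ hF) (hInt _ q.continuous), ← Real.norm_eq_abs]
    refine (norm_integral_le_of_norm_le_const (C := δ)
      (Filter.Eventually.of_forall fun ω => ?_)).trans (by simp)
    rw [Real.norm_eq_abs, abs_sub_comm]
    exact (hq _ (hX01 ω)).le
  have h2 : |(∫ t in (0 : ℝ)..1, q.eval (t ^ 2) * (1 - t ^ 2) ^ p)
      - ∫ t in (0 : ℝ)..1, F (t ^ 2) * (1 - t ^ 2) ^ p| ≤ δ * weightMoment p 0 := by
    rw [← intervalIntegral.integral_sub (Continuous.intervalIntegrable (by fun_prop) _ _)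
      (Continuous.intervalIntegrable (by fun_prop) _ _), weightMoment,
      ← intervalIntegral.integral_const_mul, ← Real.norm_eq_abs]
    refine intervalIntegral.norm_integral_le_of_norm_le zero_le_one
      (Filter.Eventually.of_forall fun t ht => ?_)
      (Continuous.intervalIntegrable (by fun_prop) _ _)
    have ht1 : t ^ 2 ≤ 1 := pow_le_one₀ ht.1.le ht.2
    rw [← sub_mul, Real.norm_eq_abs, abs_mul, abs_of_nonneg (pow_nonneg (sub_nonneg.2 ht1) p),
      pow_zero, one_mul]
    exact mul_le_mul_of_nonneg_right (hq _ ⟨sq_nonneg t, ht1⟩).le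
      (pow_nonneg (sub_nonneg.2 ht1) p)
  have h3 : weightMoment p 0 * ∫ ω, F (X ω) ∂μ
      - ∫ t in (0 : ℝ)..1, F (t ^ 2) * (1 - t ^ 2) ^ p
      = weightMoment p 0 * (∫ ω, F (X ω) ∂μ - ∫ ω, q.eval (X ω) ∂μ)
        + ((∫ t in (0 : ℝ)..1, q.eval (t ^ 2) * (1 - t ^ 2) ^ p)
      - ∫ t in (0 : ℝ)..1, F (t ^ 2) * (1 - t ^ 2) ^ p) := by
    rw [← hpoly q]; ring
  rw [h3]
  refine (abs_add_le _ _).trans ?_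
  rw [abs_mul, abs_of_pos hw]
  have h4 := mul_le_mul_of_nonneg_left h1 hw.le
  have h5 : ε = 2 * (δ * weightMoment p 0) := by rw [hδ]; field_simp
  linarith

/-! ### Evaluation of the mean deviation -/

/-- Since `t (1 - t ^ 2) ^ (p + 1)` is an antiderivative of `(1 - (2 p + 3) t ^ 2) (1 - t ^ 2) ^ p`,
the mean deviation from `1 / (2 p + 4)` is explicit up to a small error. -/
lemma abs_deviation_sub_le (p : ℕ) (s : ℝ) (hs0 : 0 < s) (hs1 : s ≤ 1)
    (hs : s ^ 2 = 1 / (2 * p + 4 : ℝ)) :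
    |(2 * p + 3 : ℝ) * (∫ t in (0 : ℝ)..1, |t ^ 2 - 1 / (2 * p + 4 : ℝ)| * (1 - t ^ 2) ^ p)
      - 2 * (s * (1 - s ^ 2) ^ (p + 1))| ≤ weightMoment p 0 / (2 * p + 4) := by
  rw [← hs]
  have hii : ∀ (f : ℝ → ℝ) (a b : ℝ), Continuous f → IntervalIntegrable f volume a b :=
    fun f a b hf => hf.intervalIntegrable a b
  have hd : ∀ t : ℝ, HasDerivAt (fun t : ℝ => t * (1 - t ^ 2) ^ (p + 1))
      ((1 - t ^ 2) ^ p - (2 * p + 3 : ℝ) * (t ^ 2 * (1 - t ^ 2) ^ p)) t := by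
    intro t
    have h := (hasDerivAt_id t).mul (((hasDerivAt_pow 2 t).const_sub 1).pow (p + 1))
    refine h.congr_deriv ?_
    simp only [Nat.add_sub_cancel, Pi.pow_apply, id]
    push_cast
    simp only [pow_succ]
    ring
  have hF : ∀ a b : ℝ, (∫ t in a..b, (1 - t ^ 2) ^ p)
      - (2 * p + 3 : ℝ) * (∫ t in a..b, t ^ 2 * (1 - t ^ 2) ^ p)
      = b * (1 - b ^ 2) ^ (p + 1) - a * (1 - a ^ 2) ^ (p + 1) := by
    intro a b
    rw [← intervalIntegral.integral_eq_sub_of_hasDerivAt (a := a) (b := b) (fun t _ => hd t)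
      (hii _ _ _ (by fun_prop)), intervalIntegral.integral_sub (hii _ _ _ (by fun_prop))
      (hii _ _ _ (by fun_prop)), intervalIntegral.integral_const_mul]
  have h0 := hF 0 s
  have h1 := hF s 1
  have hW : weightMoment p 0 = (∫ t in (0 : ℝ)..s, (1 - t ^ 2) ^ p)
      + ∫ t in s..1, (1 - t ^ 2) ^ p := by
    rw [intervalIntegral.integral_add_adjacent_intervals (hii _ _ _ (by fun_prop))
      (hii _ _ _ (by fun_prop))]
    simp [weightMoment]
  have hp0 : 0 ≤ ∫ t in (0 : ℝ)..s, (1 - t ^ 2) ^ p :=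
    intervalIntegral.integral_nonneg hs0.le fun t ht =>
      pow_nonneg (by nlinarith [ht.1, ht.2]) p
  have hp1 : 0 ≤ ∫ t in s..1, (1 - t ^ 2) ^ p :=
    intervalIntegral.integral_nonneg hs1 fun t ht =>
      pow_nonneg (by nlinarith [ht.1, ht.2]) p
  have hA : (∫ t in (0 : ℝ)..1, |t ^ 2 - s ^ 2| * (1 - t ^ 2) ^ p)
      = (s ^ 2 * (∫ t in (0 : ℝ)..s, (1 - t ^ 2) ^ p)
          - ∫ t in (0 : ℝ)..s, t ^ 2 * (1 - t ^ 2) ^ p)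
        + ((∫ t in s..1, t ^ 2 * (1 - t ^ 2) ^ p)
          - s ^ 2 * (∫ t in s..1, (1 - t ^ 2) ^ p)) := by
    rw [← intervalIntegral.integral_add_adjacent_intervals (b := s) (hii _ _ _ (by fun_prop))
      (hii _ _ _ (by fun_prop)), ← intervalIntegral.integral_const_mul,
      ← intervalIntegral.integral_const_mul, ← intervalIntegral.integral_sub
      (hii _ _ _ (by fun_prop)) (hii _ _ _ (by fun_prop)), ← intervalIntegral.integral_sub
      (hii _ _ _ (by fun_prop)) (hii _ _ _ (by fun_prop))]
    congr 1
    · refine intervalIntegral.integral_congr fun t ht => ?_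
      rw [Set.uIcc_of_le hs0.le] at ht
      rw [abs_of_nonpos (by nlinarith [ht.1, ht.2])]
      ring
    · refine intervalIntegral.integral_congr fun t ht => ?_
      rw [Set.uIcc_of_le hs1] at ht
      rw [abs_of_nonneg (by nlinarith [ht.1, ht.2])]
      ring
  rw [hA, hW]
  set a0 := ∫ t in (0 : ℝ)..s, (1 - t ^ 2) ^ p
  set a1 := ∫ t in s..1, (1 - t ^ 2) ^ p
  set b0 := ∫ t in (0 : ℝ)..s, t ^ 2 * (1 - t ^ 2) ^ p
  set b1 := ∫ t in s..1, t ^ 2 * (1 - t ^ 2) ^ p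
  set G := s * (1 - s ^ 2) ^ (p + 1)
  simp only [zero_mul, sub_zero, one_pow, sub_self, ne_eq, Nat.add_eq_zero_iff, one_ne_zero,
    and_false, not_false_eq_true, zero_pow, mul_zero, zero_sub] at h0 h1
  have hd0 : (0 : ℝ) < 2 * p + 4 := by positivity
  have key : (2 * p + 3 : ℝ) * (s ^ 2 * a0 - b0 + (b1 - s ^ 2 * a1)) - 2 * G
      = (a1 - a0) / (2 * p + 4) := by
    have : (2 * p + 3 : ℝ) * s ^ 2 = 1 - 1 / (2 * p + 4) := by
      rw [hs]; field_simp; ring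
    have e : (2 * p + 3 : ℝ) * (s ^ 2 * a0 - b0 + (b1 - s ^ 2 * a1)) - 2 * G
      = ((2 * p + 3 : ℝ) * s ^ 2) * (a0 - a1) - (2 * p + 3) * b0 + (2 * p + 3) * b1 - 2 * G := by
      ring
    rw [e, this]
    have e2 : (a1 - a0) / (2 * p + 4) = (a1 - a0) * (1 / (2 * p + 4)) := by ring
    rw [e2]
    linarith
  rw [key, abs_div, abs_of_pos hd0]
  gcongr
  exact abs_le.2 ⟨by linarith, by linarith⟩

/-- Bounds for the explicit main term, from the Wallis bounds on the normalising constant and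
`(1 - 1 / d) ^ d ≤ e⁻¹ ≤ (1 - 1 / d) ^ (d - 1)`. -/
lemma main_term_bounds (p : ℕ) (s : ℝ) (hs0 : 0 < s) (hs : s ^ 2 = 1 / (2 * p + 4 : ℝ)) :
    √(2 / (Real.pi * Real.exp 1)) - 3 / (2 * p + 4)
        ≤ s * (1 - s ^ 2) ^ (p + 1) / weightMoment p 0 ∧
      s * (1 - s ^ 2) ^ (p + 1) / weightMoment p 0 ≤ √(2 / (Real.pi * Real.exp 1)) := by
  have hW := weightMoment_sq p
  have hWpos := weightMoment_pos p
  have hWu := Real.Wallis.W_le p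
  have hWl := Real.Wallis.le_W p
  have hpi := Real.pi_pos
  set W := weightMoment p 0
  set d : ℝ := 2 * p + 4 with hd
  have hd4 : 4 ≤ d := by
    have : (0 : ℝ) ≤ p := Nat.cast_nonneg p
    rw [hd]; linarith
  have hd0 : 0 < d := by linarith
  have hx0 : 0 < 1 - 1 / d := by
    have : 1 / d ≤ 1 / 4 := one_div_le_one_div_of_le (by norm_num) hd4
    linarith
  have hx1 : 1 - 1 / d ≤ 1 := by have : 0 < 1 / d := by positivity
                                 linarith
  have hpe : 2 / (Real.pi * Real.exp 1) = 2 / Real.pi * Real.exp (-1) := by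
    rw [Real.exp_neg]; field_simp
  have hA2 : (s * (1 - s ^ 2) ^ (p + 1) / W) ^ 2
      = 1 / d * (1 - 1 / d) ^ (2 * p + 2) / W ^ 2 := by
    rw [div_pow, mul_pow, hs, ← pow_mul]
    congr 3
    ring
  have hA0 : 0 ≤ s * (1 - s ^ 2) ^ (p + 1) / W := by
    rw [hs]; positivity
  have hexp_up : (1 - 1 / d) ^ (2 * p + 4) ≤ Real.exp (-1) := by
    calc (1 - 1 / d) ^ (2 * p + 4) ≤ Real.exp (-(1 / d)) ^ (2 * p + 4) := by
          gcongr
          exact Real.one_sub_le_exp_neg _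
      _ = Real.exp (-1) := by
          rw [← Real.exp_nat_mul]
          congr 1
          push_cast
          rw [← hd]
          field_simp
  have hexp_lo : Real.exp (-1) ≤ (1 - 1 / d) ^ (2 * p + 2) := by
    have h1 : (1 - 1 / d)⁻¹ ≤ Real.exp (1 / (d - 1)) := by
      have h2 := Real.add_one_le_exp (1 / (d - 1))
      have h3 : (1 - 1 / d)⁻¹ = 1 / (d - 1) + 1 := by
        have : d - 1 ≠ 0 := by linarith
        field_simp
        ring
      rwa [h3]
    have h4 : Real.exp (-(1 / (d - 1))) ≤ 1 - 1 / d := by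
      rw [Real.exp_neg]
      exact inv_le_of_inv_le₀ hx0 h1
    calc Real.exp (-1) = Real.exp (-(1 / (d - 1))) ^ (2 * p + 3) := by
          rw [← Real.exp_nat_mul]
          congr 1
          push_cast
          have : d - 1 ≠ 0 := by linarith
          rw [show (2 * p + 3 : ℝ) = d - 1 by rw [hd]; ring]
          field_simp
      _ ≤ (1 - 1 / d) ^ (2 * p + 3) := by gcongr
      _ ≤ (1 - 1 / d) ^ (2 * p + 2) := pow_le_pow_of_le_one hx0.le hx1 (by omega)
  have hW2u : W ^ 2 ≤ Real.pi / 2 / (d - 3) := by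
    rw [le_div_iff₀ (by linarith)]
    have : d - 3 = 2 * p + 1 := by rw [hd]; ring
    rw [this]; linarith
  have hW2l : Real.pi / 2 / (d - 2) ≤ W ^ 2 := by
    have h1 : (0 : ℝ) < 2 * p + 1 := by positivity
    rw [show d - 2 = 2 * p + 2 by rw [hd]; ring]
    have h2 : (2 * (p : ℝ) + 1) * (Real.pi / 2 / (2 * p + 2)) ≤ (2 * p + 1) * W ^ 2 := by
      rw [hW]
      calc _ = (2 * (p : ℝ) + 1) / (2 * p + 2) * (Real.pi / 2) := by ring
        _ ≤ _ := hWl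
    exact le_of_mul_le_mul_left h2 h1
  have hW2pos : 0 < W ^ 2 := by positivity
  constructor
  · set r := √(2 / (Real.pi * Real.exp 1)) with hr
    have hr2 : r ^ 2 = 2 / Real.pi * Real.exp (-1) := by
      rw [hr, Real.sq_sqrt (by positivity), hpe]
    have hr0 : 0 ≤ r := Real.sqrt_nonneg _
    have hr1 : r ≤ 1 := by
      rw [hr, Real.sqrt_le_one, div_le_one (by positivity)]
      nlinarith [Real.pi_gt_three, Real.add_one_le_exp 1]
    have hq0 : 0 ≤ 1 - 3 / d := by
      rw [sub_nonneg, div_le_one hd0]; linarith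
    have hq1 : 1 - 3 / d ≤ 1 := by
      have : 0 < 3 / d := by positivity
      linarith
    have hstep : (r * (1 - 3 / d)) ^ 2 ≤ (s * (1 - s ^ 2) ^ (p + 1) / W) ^ 2 := by
      rw [hA2, mul_pow, hr2]
      calc 2 / Real.pi * Real.exp (-1) * (1 - 3 / d) ^ 2
          ≤ 2 / Real.pi * Real.exp (-1) * (1 - 3 / d) := by
            gcongr
            nlinarith
        _ = 1 / d * Real.exp (-1) / (Real.pi / 2 / (d - 3)) := by
            have : d - 3 ≠ 0 := by linarith
            field_simp
        _ ≤ 1 / d * (1 - 1 / d) ^ (2 * p + 2) / W ^ 2 := by gcongr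
    have h := abs_le_of_sq_le_sq hstep hA0
    have h2 : r * (3 / d) ≤ 1 * (3 / d) := by gcongr
    linarith [(abs_le.1 h).2]
  · apply Real.le_sqrt_of_sq_le
    rw [hA2, hpe]
    have hx2 : 1 - 2 / d ≤ (1 - 1 / d) ^ 2 := by
      have : 2 / d = 2 * (1 / d) := by ring
      nlinarith [sq_nonneg (1 / d)]
    have hd2 : 0 < d - 2 := by linarith
    calc 1 / d * (1 - 1 / d) ^ (2 * p + 2) / W ^ 2
        ≤ 1 / d * (1 - 1 / d) ^ (2 * p + 2) / (Real.pi / 2 / (d - 2)) := by gcongr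
      _ = 2 / Real.pi * ((1 - 2 / d) * (1 - 1 / d) ^ (2 * p + 2)) := by
          field_simp
      _ ≤ 2 / Real.pi * ((1 - 1 / d) ^ 2 * (1 - 1 / d) ^ (2 * p + 2)) := by gcongr
      _ = 2 / Real.pi * (1 - 1 / d) ^ (2 * p + 4) := by ring
      _ ≤ 2 / Real.pi * Real.exp (-1) := by gcongr

/-! ### The symplectic form -/

lemma sympJ_transpose (m : ℕ) : (sympJ m ℝ)ᵀ = -sympJ m ℝ := by
  unfold sympJ
  rw [Matrix.transpose_reindex, Matrix.fromBlocks_transpose]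
  ext i j
  simp only [Matrix.reindex_apply, Matrix.submatrix_apply, Matrix.neg_apply]
  rw [← Matrix.neg_apply, Matrix.fromBlocks_neg]
  simp

lemma sympJ_transpose_mul (m : ℕ) : (sympJ m ℝ)ᵀ * sympJ m ℝ = 1 := by
  unfold sympJ
  rw [Matrix.transpose_reindex, Matrix.fromBlocks_transpose]
  simp only [Matrix.reindex_apply, Matrix.submatrix_mul_equiv, Matrix.fromBlocks_multiply]
  simp [Matrix.fromBlocks_one, -Equiv.coe_trans]

/-- `J` acts as a signed permutation of the coordinates. -/
lemma sum_sympJ_mulVec_sq (m : ℕ) (v : Fin (2 * m) → ℝ) (f : ℝ → ℝ) :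
    ∑ x, f ((sympJ m ℝ *ᵥ v) x ^ 2) = ∑ x, f (v x ^ 2) := by
  set e : Fin m ⊕ Fin m ≃ Fin (2 * m) :=
    finSumFinEquiv.trans (finCongr (two_mul m).symm) with he
  rw [← e.sum_comp, ← e.sum_comp]
  have hmv : ∀ i, (sympJ m ℝ *ᵥ v) (e i)
      = (Matrix.fromBlocks 0 1 (-1) 0 *ᵥ (v ∘ e)) i := by
    intro i
    simp only [Matrix.mulVec, dotProduct, sympJ]
    rw [← e.sum_comp]
    simp [← he, Matrix.reindex_apply]
  simp only [hmv, Fintype.sum_sum_type, Matrix.fromBlocks_mulVec]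
  simp [Matrix.neg_mulVec, add_comm]

/-- The expected distance, reduced to a one-dimensional integral. -/
lemma integral_abs_sum_eq {m : ℕ} (z : Fin (2 * m)) (p : ℕ) (hp : m = p + 2)
    (μ : Measure (Matrix.orthogonalGroup (Fin (2 * m)) ℝ))
    [μ.IsHaarMeasure] [IsProbabilityMeasure μ] :
    weightMoment p 0 * (∫ O : Matrix.orthogonalGroup (Fin (2 * m)) ℝ,
          (1 / 2 : ℝ) * ∑ x : Fin (2 * m),
            |((sympJ m ℝ * (O : Matrix (Fin (2 * m)) (Fin (2 * m)) ℝ)ᵀ * sympJ m ℝ *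
                (O : Matrix (Fin (2 * m)) (Fin (2 * m)) ℝ)) x z) ^ 2
              - 1 / (2 * m : ℝ)| ∂μ)
      = 1 / 2 * (weightMoment p 0 / (2 * p + 4) + (2 * p + 3) *
          ∫ t in (0 : ℝ)..1, |t ^ 2 - 1 / (2 * p + 4 : ℝ)| * (1 - t ^ 2) ^ p) := by
  have hJ := sympJ_transpose m
  have hJ2 := sympJ_transpose_mul m
  set J := sympJ m ℝ with hJdef
  have hdm : (2 * m : ℝ) = 2 * p + 4 := by rw [hp]; push_cast; ring
  rw [hdm]
  have hcol : ∀ (O : Matrix.orthogonalGroup (Fin (2 * m)) ℝ) x,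
      (J * (O : Matrix (Fin (2 * m)) (Fin (2 * m)) ℝ)ᵀ * J *
        (O : Matrix (Fin (2 * m)) (Fin (2 * m)) ℝ)) x z = (J *ᵥ conjCol J z O) x := by
    intro O x
    rw [Matrix.mul_assoc, Matrix.mul_assoc, Matrix.mul_apply]
    simp only [Matrix.mulVec, dotProduct, conjCol, Matrix.mul_assoc]
  have hsum : ∀ O : Matrix.orthogonalGroup (Fin (2 * m)) ℝ,
      ∑ x, |((J *ᵥ conjCol J z O) x) ^ 2 - 1 / (2 * p + 4 : ℝ)|
        = 1 / (2 * p + 4 : ℝ)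
          + ∑ x ∈ Finset.univ.erase z, |conjCol J z O x ^ 2 - 1 / (2 * p + 4 : ℝ)| := by
    intro O
    rw [hJdef, sum_sympJ_mulVec_sq m _ (fun y => |y - 1 / (2 * p + 4 : ℝ)|),
      ← Finset.add_sum_erase Finset.univ _ (Finset.mem_univ z), ← hJdef, conjCol_self hJ]
    congr 1
    rw [zero_pow two_ne_zero, zero_sub, abs_neg, abs_of_pos (by positivity)]
  simp only [hcol, hsum]
  have hmeas : ∀ x, Measurable fun O => conjCol J z O x ^ 2 := fun x =>
    ((continuous_conjCol x).pow 2).measurable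
  have h01 : ∀ x (O : Matrix.orthogonalGroup (Fin (2 * m)) ℝ),
      conjCol J z O x ^ 2 ∈ Set.Icc (0 : ℝ) 1 := fun x O =>
    ⟨sq_nonneg _, conjCol_sq_le_one hJ2 O x⟩
  have hmom : ∀ x, x ≠ z → ∀ k, weightMoment p 0 * ∫ O, (conjCol J z O x ^ 2) ^ k ∂μ
      = weightMoment p k := by
    intro x hx k
    induction k with
    | zero => simp
    | succ k ih =>
      have h1 := moment_succ μ hJ hJ2 x hx k
      have h2 := weightMoment_succ p k
      have hc : ((2 * m : ℕ) + 2 * k - 1 : ℝ) = 2 * p + 2 * k + 3 := by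
        push_cast; rw [hdm]; ring
      rw [hc] at h1
      have hpos : (2 * p + 2 * k + 3 : ℝ) ≠ 0 := by positivity
      apply mul_left_cancel₀ hpos
      rw [h2, ← ih]
      linear_combination weightMoment p 0 * h1
  have hE : ∀ x, x ≠ z → weightMoment p 0 *
      ∫ O, |conjCol J z O x ^ 2 - 1 / (2 * p + 4 : ℝ)| ∂μ
      = ∫ t in (0 : ℝ)..1, |t ^ 2 - 1 / (2 * p + 4 : ℝ)| * (1 - t ^ 2) ^ p := fun x hx =>
    integral_eq_of_moments μ (fun O => conjCol J z O x ^ 2) (hmeas x) (h01 x) p (hmom x hx)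
      (fun y => |y - 1 / (2 * p + 4 : ℝ)|) (by fun_prop)
  have hInt : ∀ x, Integrable (fun O => |conjCol J z O x ^ 2 - 1 / (2 * p + 4 : ℝ)|) μ := by
    intro x
    have h := (integrable_pow_mul_pow (z := z) μ hJ2 x x 2 0).sub
      (integrable_const (1 / (2 * p + 4 : ℝ)))
    simpa using h.abs
  have hcard : ((Finset.univ.erase z).card : ℝ) = 2 * p + 3 := by
    have h1 := Finset.card_erase_add_one (Finset.mem_univ z)
    rw [Finset.card_univ, Fintype.card_fin] at h1
    have h2 : (Finset.univ.erase z).card = 2 * p + 3 := by omega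
    rw [h2]; push_cast; ring
  rw [integral_const_mul, integral_add (integrable_const _)
    (integrable_finsetSum _ fun x _ => hInt x), integral_finsetSum _ fun x _ => hInt x,
    integral_const, probReal_univ, one_smul]
  have hS : weightMoment p 0 * ∑ x ∈ Finset.univ.erase z,
      ∫ O, |conjCol J z O x ^ 2 - 1 / (2 * p + 4 : ℝ)| ∂μ
      = (2 * p + 3) * ∫ t in (0 : ℝ)..1, |t ^ 2 - 1 / (2 * p + 4 : ℝ)| * (1 - t ^ 2) ^ p := by
    rw [Finset.mul_sum, ← hcard, ← nsmul_eq_mul, ← Finset.sum_const]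
    exact Finset.sum_congr rfl fun x hx => hE x (Finset.ne_of_mem_erase hx)
  rw [← hS]
  ring

/-- For `d = 2m ≥ 4` even and `J` the canonical symplectic form, the Haar
average over the real orthogonal group `O(d)` of the TV distance between the Born
distribution of the first column of `J Oᵀ J O` and the constant distribution lies in
`[√(2/(πe)) − 10/d, √(2/(πe)) + 5/d]`. -/
theorem haar_orthogonal_DIII_expected_tvd_bounds
    (m : ℕ) (hm : 2 ≤ m)
    (μ : Measure (Matrix.orthogonalGroup (Fin (2 * m)) ℝ))
    [μ.IsHaarMeasure] [IsProbabilityMeasure μ] :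
    Real.sqrt (2 / (Real.pi * Real.exp 1)) - 10 / (2 * m : ℝ)
      ≤ (∫ O : Matrix.orthogonalGroup (Fin (2 * m)) ℝ,
          (1 / 2 : ℝ) * ∑ x : Fin (2 * m),
            |((sympJ m ℝ * (O : Matrix (Fin (2 * m)) (Fin (2 * m)) ℝ)ᵀ * sympJ m ℝ *
                (O : Matrix (Fin (2 * m)) (Fin (2 * m)) ℝ)) x ⟨0, by omega⟩) ^ 2
              - 1 / (2 * m : ℝ)| ∂μ) ∧
    (∫ O : Matrix.orthogonalGroup (Fin (2 * m)) ℝ,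
          (1 / 2 : ℝ) * ∑ x : Fin (2 * m),
            |((sympJ m ℝ * (O : Matrix (Fin (2 * m)) (Fin (2 * m)) ℝ)ᵀ * sympJ m ℝ *
                (O : Matrix (Fin (2 * m)) (Fin (2 * m)) ℝ)) x ⟨0, by omega⟩) ^ 2
              - 1 / (2 * m : ℝ)| ∂μ)
      ≤ Real.sqrt (2 / (Real.pi * Real.exp 1)) + 5 / (2 * m : ℝ) := by
  obtain ⟨p, hp⟩ : ∃ p, m = p + 2 := ⟨m - 2, by omega⟩
  have hI := integral_abs_sum_eq (⟨0, by omega⟩ : Fin (2 * m)) p hp μ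
  have hdm : (2 * m : ℝ) = 2 * p + 4 := by rw [hp]; push_cast; ring
  set I := ∫ O : Matrix.orthogonalGroup (Fin (2 * m)) ℝ,
          (1 / 2 : ℝ) * ∑ x : Fin (2 * m),
            |((sympJ m ℝ * (O : Matrix (Fin (2 * m)) (Fin (2 * m)) ℝ)ᵀ * sympJ m ℝ *
                (O : Matrix (Fin (2 * m)) (Fin (2 * m)) ℝ)) x ⟨0, by omega⟩) ^ 2
              - 1 / (2 * m : ℝ)| ∂μ
  rw [hdm]
  set s : ℝ := √(1 / (2 * p + 4)) with hsdef
  have hs0 : 0 < s := Real.sqrt_pos.2 (by positivity)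
  have hs : s ^ 2 = 1 / (2 * p + 4 : ℝ) := Real.sq_sqrt (by positivity)
  have hs1 : s ≤ 1 := by
    rw [hsdef, Real.sqrt_le_one, div_le_one (by positivity)]
    have : (0 : ℝ) ≤ p := Nat.cast_nonneg p
    linarith
  have hdev := abs_le.1 (abs_deviation_sub_le p s hs0 hs1 hs)
  have hmain := main_term_bounds p s hs0 hs
  have hW := weightMoment_pos p
  set W := weightMoment p 0
  set G := s * (1 - s ^ 2) ^ (p + 1)
  -- The error terms combine to `G / W ≤ I ≤ G / W + 1 / d`.
  have hlo : G / W ≤ I := by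
    rw [div_le_iff₀ hW, mul_comm, hI]
    linarith [hdev.1]
  have hup : I ≤ G / W + 1 / (2 * p + 4) := by
    have h : W * I ≤ W * (G / W + 1 / (2 * p + 4)) := by
      have e : W * (G / W + 1 / (2 * p + 4)) = G + W / (2 * p + 4) := by field_simp
      rw [hI, e]
      linarith [hdev.2]
    exact le_of_mul_le_mul_left h hW
  have h3 : (3 : ℝ) / (2 * p + 4) ≤ 10 / (2 * p + 4) := by gcongr; norm_num
  have h5 : (1 : ℝ) / (2 * p + 4) ≤ 5 / (2 * p + 4) := by gcongr; norm_num
  exact ⟨by linarith [hmain.1], by linarith [hmain.2]⟩
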